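/- arXiv:1904.08203 — 8 statements merged into one kernel-verified Lean document; each statement's English description precedes it below -/
import Mathlib

section
/- Let α, β, γ, λ be strictly positive real numbers and let ϱ ∈ (β − γ/α, β). Then there exists δ₀ > 0 such that for every δ ≥ δ₀ there exists p > 0 for which the complex number p + i·q(p) is a root of the polynomial P, i.e. P(p + i·q(p)) = 0. -/
/-- The function `q(x)` from the paper. -/
noncomputable def qfun (α β γ lam δ ϱ x : ℝ) : ℝ :=
  Real.sqrt ((4 * x ^ 3 + 3 * (α + δ) * x ^ 2 + 2 * (α * δ + β * lam) * x
      + lam * (γ + δ * β - ϱ * δ)) / (α + δ + 4 * x))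

/-- The fourth-order polynomial `P(ξ)` from the paper. -/
noncomputable def Ppoly (α β γ lam δ ϱ : ℝ) (ξ : ℂ) : ℂ :=
  ξ ^ 4 + (α + δ : ℝ) * ξ ^ 3 + (α * δ + β * lam : ℝ) * ξ ^ 2
    + (lam * (γ + δ * β - ϱ * δ) : ℝ) * ξ + (lam * γ * δ : ℝ)

/-!
Write `P = ξ⁴ + aξ³ + bξ² + cξ + d`. Dividing by `ξ² - sξ + m` and eliminating `m` shows that the
sums `s` of two roots of `P` are the zeros of a monic sextic whose constant term is the Hurwitz
determinant `abc - c² - a²d`. For large `δ` this determinant is negative, its leading term being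
`-λ(γ - α(β - ϱ))δ³`, so the sextic has a zero `s > 0`. The corresponding quadratic factor has the
roots `s / 2 ± i q(s / 2)`.
-/

open Filter Polynomial

section PairSum

variable {R : Type*} [CommRing R]

/-- The resolvent `∏_{i<j} (X - (xᵢ + xⱼ))` of the quartic `x⁴ + a x³ + b x² + c x + d` with roots
`x₁, …, x₄`, whose zeros are the sums of two roots of the quartic. It is written in the form in
which it arises by eliminating `m` from the conditions for `x² - s x + m` to divide the quartic. -/
noncomputable def pairSumResolvent (a b c d : R) : R[X] :=
  (X ^ 3 + C a * X ^ 2 + C b * X + C c) *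
      ((X ^ 2 + C a * X + C b) * (2 * X + C a) - (X ^ 3 + C a * X ^ 2 + C b * X + C c)) -
    C d * (2 * X + C a) ^ 2

lemma eval_pairSumResolvent (a b c d s : R) :
    (pairSumResolvent a b c d).eval s =
      (s ^ 3 + a * s ^ 2 + b * s + c) *
          ((s ^ 2 + a * s + b) * (2 * s + a) - (s ^ 3 + a * s ^ 2 + b * s + c)) -
        d * (2 * s + a) ^ 2 := by
  simp [pairSumResolvent]

lemma eval_zero_pairSumResolvent (a b c d : R) :
    (pairSumResolvent a b c d).eval 0 = a * b * c - c ^ 2 - a ^ 2 * d := by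
  rw [eval_pairSumResolvent]
  ring

lemma monic_pairSumResolvent (a b c d : R) : (pairSumResolvent a b c d).Monic := by
  have expand : pairSumResolvent a b c d =
      X ^ 6 + C (3 * a) * X ^ 5 + C (3 * a ^ 2 + 2 * b) * X ^ 4 + C (a ^ 3 + 4 * a * b) * X ^ 3
        + C (2 * a ^ 2 * b + b ^ 2 + a * c - 4 * d) * X ^ 2
        + C (a ^ 2 * c + a * b ^ 2 - 4 * a * d) * X + C (a * b * c - c ^ 2 - a ^ 2 * d) := by
    simp only [pairSumResolvent, map_add, map_sub, map_mul, map_pow, map_ofNat]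
    ring
  rw [expand]
  monicity!

lemma quartic_eq_zero_of_quadratic_eq_zero {a b c d s m z : R} (hz : z ^ 2 - s * z + m = 0)
    (hlin : m * (2 * s + a) = s ^ 3 + a * s ^ 2 + b * s + c)
    (hconst : m * (s ^ 2 + a * s + b - m) = d) :
    z ^ 4 + a * z ^ 3 + b * z ^ 2 + c * z + d = 0 := by
  linear_combination
    (z ^ 2 + (s + a) * z + (s ^ 2 + a * s + b - m)) * hz - z * hlin - hconst

lemma mul_eq_of_isRoot_pairSumResolvent [IsDomain R] {a b c d s m : R}
    (hs : (pairSumResolvent a b c d).IsRoot s) (hsa : 2 * s + a ≠ 0)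
    (hlin : m * (2 * s + a) = s ^ 3 + a * s ^ 2 + b * s + c) :
    m * (s ^ 2 + a * s + b - m) = d := by
  rw [IsRoot.def, eval_pairSumResolvent, ← hlin] at hs
  refine mul_right_cancel₀ (pow_ne_zero 2 hsa) ?_
  linear_combination hs

end PairSum

lemma exists_pos_isRoot_of_eval_zero_neg {f : ℝ[X]} (hlead : 0 ≤ f.leadingCoeff)
    (h0 : f.eval 0 < 0) : ∃ x, 0 < x ∧ f.IsRoot x := by
  have hdeg : 0 < f.degree := by
    by_contra! hdeg
    obtain ⟨r, rfl⟩ : ∃ r, f = C r := ⟨_, eq_C_of_degree_le_zero hdeg⟩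
    rw [leadingCoeff_C] at hlead
    rw [eval_C] at h0
    exact hlead.not_gt h0
  have htop : Tendsto f.eval atTop atTop := f.tendsto_atTop_of_leadingCoeff_nonneg hdeg hlead
  obtain ⟨M, hM, hM0⟩ := ((htop.eventually_gt_atTop 0).and (eventually_gt_atTop 0)).exists
  obtain ⟨x, hx, hfx⟩ := intermediate_value_Ioo hM0.le f.continuousOn ⟨h0, hM⟩
  exact ⟨x, hx.1, hfx⟩

theorem exists_quartic_root_of_hurwitz_neg {a b c d : ℝ} (ha : 0 ≤ a) (hb : 0 ≤ b) (hc : 0 ≤ c)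
    (hurwitz : a * b * c - c ^ 2 - a ^ 2 * d < 0) :
    ∃ p : ℝ, 0 < p ∧
      let z : ℂ := p + Complex.I * √((4 * p ^ 3 + 3 * a * p ^ 2 + 2 * b * p + c) / (a + 4 * p))
      z ^ 4 + a * z ^ 3 + b * z ^ 2 + c * z + d = 0 := by
  obtain ⟨s, hs, hroot⟩ := exists_pos_isRoot_of_eval_zero_neg
    ((monic_pairSumResolvent a b c d).leadingCoeff.symm ▸ zero_le_one)
    ((eval_zero_pairSumResolvent a b c d).trans_lt hurwitz)
  obtain ⟨p, rfl⟩ : ∃ p, s = 2 * p := ⟨s / 2, by ring⟩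
  have hp : 0 < p := by linarith
  refine ⟨p, hp, ?_⟩
  set q := √((4 * p ^ 3 + 3 * a * p ^ 2 + 2 * b * p + c) / (a + 4 * p)) with hq
  have hq_sq : q ^ 2 * (a + 4 * p) = 4 * p ^ 3 + 3 * a * p ^ 2 + 2 * b * p + c := by
    rw [hq, Real.sq_sqrt (by positivity), div_mul_cancel₀ _ (by positivity)]
  have hquad : (p + Complex.I * q) ^ 2 - (2 * p : ℝ) * (p + Complex.I * q)
      + (p ^ 2 + q ^ 2 : ℝ) = 0 := by
    push_cast
    linear_combination (q : ℂ) ^ 2 * Complex.I_sq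
  have hlin : (p ^ 2 + q ^ 2) * (2 * (2 * p) + a)
      = (2 * p) ^ 3 + a * (2 * p) ^ 2 + b * (2 * p) + c := by
    linear_combination hq_sq
  have hconst := mul_eq_of_isRoot_pairSumResolvent hroot (by positivity) hlin
  exact quartic_eq_zero_of_quadratic_eq_zero hquad (mod_cast hlin) (mod_cast hconst)

lemma eventually_cubic_neg {k₃ : ℝ} (hk₃ : k₃ < 0) (k₂ k₁ k₀ : ℝ) :
    ∀ᶠ x : ℝ in atTop, k₃ * x ^ 3 + k₂ * x ^ 2 + k₁ * x + k₀ < 0 := by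
  let f : Cubic ℝ := ⟨k₃, k₂, k₁, k₀⟩
  have hdeg : 0 < f.toPoly.degree := by
    rw [Cubic.degree_of_a_ne_zero hk₃.ne]
    norm_num
  have hlead : f.toPoly.leadingCoeff ≤ 0 := by
    rw [Cubic.leadingCoeff_of_a_ne_zero hk₃.ne]
    exact hk₃.le
  have hbot := f.toPoly.tendsto_atBot_of_leadingCoeff_nonpos hdeg hlead
  simpa [f, Cubic.toPoly] using hbot.eventually_lt_atBot 0

lemma eventually_hurwitz_neg {α γ lam σ : ℝ} (β : ℝ) (hlam : 0 < lam) (hσ : α * σ < γ) :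
    ∀ᶠ δ : ℝ in atTop,
      (α + δ) * (α * δ + β * lam) * (lam * (γ + δ * σ)) - (lam * (γ + δ * σ)) ^ 2
        - (α + δ) ^ 2 * (lam * γ * δ) < 0 := by
  have hlead : lam * (α * σ - γ) < 0 := mul_neg_of_pos_of_neg hlam (by linarith)
  filter_upwards [eventually_cubic_neg hlead
    (lam * (σ * (α ^ 2 + β * lam) - α * γ - lam * σ ^ 2))
    (lam * (σ * α * β * lam + γ * β * lam - 2 * lam * γ * σ))
    (lam * (α * β * lam * γ - lam * γ ^ 2))] with δ hδ
  linear_combination hδ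

theorem exists_root_of_P_general (α β γ lam ϱ : ℝ) (hα : 0 < α) (hlam : 0 < lam)
    (hϱ₁ : β - γ / α < ϱ) (hϱ₂ : ϱ ≤ β) :
    ∃ δ₀ > 0, ∀ δ ≥ δ₀, ∃ p : ℝ, 0 < p ∧
      Ppoly α β γ lam δ ϱ ((p : ℂ) + Complex.I * (qfun α β γ lam δ ϱ p : ℂ)) = 0 := by
  have hσ : α * (β - ϱ) < γ := by
    rw [← lt_div_iff₀' hα]
    linarith
  have hσ₀ : 0 ≤ β - ϱ := sub_nonneg.2 hϱ₂
  have hγ : 0 < γ := (mul_nonneg hα.le hσ₀).trans_lt hσ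
  have hb : ∀ᶠ δ : ℝ in atTop, 0 ≤ α * δ + β * lam :=
    (tendsto_atTop_add_const_right _ _ (tendsto_id.const_mul_atTop hα)).eventually_ge_atTop 0
  obtain ⟨δ₀, hδ₀⟩ := eventually_atTop.1 (hb.and (eventually_hurwitz_neg β hlam hσ))
  refine ⟨max δ₀ 1, by positivity, fun δ hδ => ?_⟩
  obtain ⟨hb, hurwitz⟩ := hδ₀ δ ((le_max_left _ _).trans hδ)
  have hδ_pos : 0 < δ := one_pos.trans_le ((le_max_right _ _).trans hδ)
  have hc : lam * (γ + δ * β - ϱ * δ) = lam * (γ + δ * (β - ϱ)) := by ring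
  exact exists_quartic_root_of_hurwitz_neg (d := lam * γ * δ) (add_pos hα hδ_pos).le hb
    (hc ▸ by positivity : 0 ≤ lam * (γ + δ * β - ϱ * δ)) (hc ▸ hurwitz)

/-- For every `ϱ ∈ (β - γ/α, β)` and every sufficiently large `δ > 0`, there is `p > 0`
such that `p + i q(p)` is a root of `P`. -/
theorem exists_root_of_P (α β γ lam ϱ : ℝ) (hα : 0 < α) (hβ : 0 < β) (hγ : 0 < γ)
    (hlam : 0 < lam) (hϱ₁ : β - γ / α < ϱ) (hϱ₂ : ϱ < β) :
    ∃ δ₀ > 0, ∀ δ ≥ δ₀, ∃ p : ℝ, 0 < p ∧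
      Ppoly α β γ lam δ ϱ ((p : ℂ) + Complex.I * (qfun α β γ lam δ ϱ p : ℂ)) = 0 :=
  exists_root_of_P_general α β γ lam ϱ hα hlam hϱ₁ hϱ₂.le
end

section
/- Let α, β, γ, λ, δ be strictly positive real numbers and 0 < ϱ < β. Then f(x) tends to −∞ as x tends to +∞. -/
/-- The function `f(x)` from the paper. -/
noncomputable def ffun (α β γ lam δ ϱ x : ℝ) : ℝ :=
  x ^ 4 + (α + δ) * x ^ 3 + (α * δ + β * lam) * x ^ 2 + lam * (γ + δ * β - ϱ * δ) * x
    + γ * δ * lam + (qfun α β γ lam δ ϱ x) ^ 4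
    - (6 * x ^ 2 + 3 * (α + δ) * x + α * δ + β * lam) * (qfun α β γ lam δ ϱ x) ^ 2

/-!
With `P(z) = z⁴ + (α + δ) z³ + (αδ + βλ) z² + λ(γ + δβ - ϱδ) z + γδλ`, Taylor expansion at `x` gives
`Im P(x + iy) = y (P'(x) - (P'''(x) / 6) y²)`, so for large `x` the height above `x` at which this
imaginary part vanishes is `q(x)`, and `f(x) = Re P(x + i q(x))`. As `P'(x) ~ 4x³` and
`P'''(x) / 6 ~ 4x`, we get `q(x) ~ x`, hence `f(x) / x⁴ → Re (1 + i)⁴ = -4`.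
-/

open Bornology Filter Polynomial Topology

theorem tendsto_aeval_div_pow {ι R 𝕜 : Type*} [CommSemiring R] [NormedField 𝕜] [Algebra R 𝕜]
    {l : Filter ι} {p : R[X]} {n : ℕ} (hp : p.natDegree ≤ n) {s z : ι → 𝕜} {w : 𝕜}
    (hs : Tendsto s l (cobounded 𝕜)) (hz : Tendsto (fun i ↦ z i / s i) l (𝓝 w)) :
    Tendsto (fun i ↦ aeval (z i) p / s i ^ n) l (𝓝 (algebraMap R 𝕜 (p.coeff n) * w ^ n)) := by
  have hinv : Tendsto (fun i ↦ (s i)⁻¹) l (𝓝 0) := tendsto_inv₀_cobounded.comp hs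
  have hsum : Tendsto (fun i ↦ ∑ k ∈ Finset.range (n + 1),
      algebraMap R 𝕜 (p.coeff k) * (z i / s i) ^ k * (s i)⁻¹ ^ (n - k)) l
      (𝓝 (∑ k ∈ Finset.range (n + 1), algebraMap R 𝕜 (p.coeff k) * w ^ k * 0 ^ (n - k))) :=
    tendsto_finsetSum _ fun k _ ↦ ((hz.pow k).const_mul _).mul (hinv.pow (n - k))
  have hlimit : ∑ k ∈ Finset.range (n + 1), algebraMap R 𝕜 (p.coeff k) * w ^ k * 0 ^ (n - k) =
      algebraMap R 𝕜 (p.coeff n) * w ^ n := by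
    rw [Finset.sum_range_succ, Finset.sum_eq_zero, zero_add, Nat.sub_self, pow_zero, mul_one]
    intro k hk
    rw [zero_pow (Nat.sub_ne_zero_of_lt (Finset.mem_range.mp hk)), mul_zero]
  rw [hlimit] at hsum
  refine hsum.congr' ?_
  filter_upwards [hs.eventually_ne_cobounded 0] with i hi
  rw [aeval_eq_sum_range' (Nat.lt_succ_of_le hp), Finset.sum_div]
  refine Finset.sum_congr rfl fun k hk ↦ ?_
  obtain ⟨m, rfl⟩ := Nat.exists_eq_add_of_le (Nat.le_of_lt_succ (Finset.mem_range.mp hk))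
  rw [Nat.add_sub_cancel_left, Algebra.smul_def, pow_add, div_pow, inv_pow]
  field_simp

theorem tendsto_eval_hasseDeriv_div_pow_atTop {p : ℝ[X]} {n k : ℕ} (hp : p.natDegree ≤ n + k) :
    Tendsto (fun x ↦ (hasseDeriv k p).eval x / x ^ n) atTop
      (𝓝 ((n + k).choose k * p.coeff (n + k))) := by
  have hdegree : (hasseDeriv k p).natDegree ≤ n :=
    (natDegree_hasseDeriv_le p k).trans (Nat.sub_le_of_le_add hp)
  have hratio : Tendsto (fun x : ℝ ↦ x / x) atTop (𝓝 1) :=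
    tendsto_const_nhds.congr' <| (eventually_ne_atTop 0).mono fun x hx ↦ (div_self hx).symm
  simpa [hasseDeriv_coeff] using
    tendsto_aeval_div_pow hdegree (RCLike.tendsto_ofReal_atTop_cobounded ℝ) hratio

/-- The monic quartic `P` whose Taylor expansion at `x` produces `q(x)` and `f(x)`; written in
monomials, on which Hasse derivatives act termwise. -/
noncomputable def quartic (α β γ lam δ ϱ : ℝ) : ℝ[X] :=
  monomial 4 1 + monomial 3 (α + δ) + monomial 2 (α * δ + β * lam)
    + monomial 1 (lam * (γ + δ * β - ϱ * δ)) + monomial 0 (γ * δ * lam)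

section

variable (α β γ lam δ ϱ : ℝ)

theorem natDegree_quartic_le : (quartic α β γ lam δ ϱ).natDegree ≤ 4 := by
  unfold quartic
  compute_degree

theorem coeff_four_quartic : (quartic α β γ lam δ ϱ).coeff 4 = 1 := by
  unfold quartic
  compute_degree!

theorem qfun_eq_sqrt_eval_hasseDeriv (x : ℝ) :
    qfun α β γ lam δ ϱ x = √((hasseDeriv 1 (quartic α β γ lam δ ϱ)).eval x /
      (hasseDeriv 3 (quartic α β γ lam δ ϱ)).eval x) := by
  have hderiv₁ : (hasseDeriv 1 (quartic α β γ lam δ ϱ)).eval x = 4 * x ^ 3 + 3 * (α + δ) * x ^ 2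
      + 2 * (α * δ + β * lam) * x + lam * (γ + δ * β - ϱ * δ) := by
    simp only [quartic, map_add, hasseDeriv_monomial, eval_add, eval_monomial, Nat.choose,
      Nat.reduceSub]
    push_cast
    ring
  have hderiv₃ : (hasseDeriv 3 (quartic α β γ lam δ ϱ)).eval x = α + δ + 4 * x := by
    simp only [quartic, map_add, hasseDeriv_monomial, eval_add, eval_monomial, Nat.choose,
      Nat.reduceSub]
    push_cast
    ring
  rw [qfun, hderiv₁, hderiv₃]

theorem ffun_eq_re_aeval_quartic (x : ℝ) :
    ffun α β γ lam δ ϱ x =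
      (aeval (x + qfun α β γ lam δ ϱ x * Complex.I) (quartic α β γ lam δ ϱ)).re := by
  simp only [ffun, quartic, map_add, aeval_monomial, Complex.coe_algebraMap, pow_succ, pow_zero,
    one_mul, Complex.add_re, Complex.add_im, Complex.mul_re, Complex.mul_im, Complex.ofReal_re,
    Complex.ofReal_im, Complex.I_re, Complex.I_im, Complex.one_re, Complex.one_im]
  ring

theorem tendsto_qfun_div_self : Tendsto (fun x ↦ qfun α β γ lam δ ϱ x / x) atTop (𝓝 1) := by
  set P := quartic α β γ lam δ ϱ with hP
  have hnum : Tendsto (fun x ↦ (hasseDeriv 1 P).eval x / x ^ 3) atTop (𝓝 4) := by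
    simpa [coeff_four_quartic, hP] using
      tendsto_eval_hasseDeriv_div_pow_atTop (n := 3) (k := 1)
        (natDegree_quartic_le α β γ lam δ ϱ)
  have hden : Tendsto (fun x ↦ (hasseDeriv 3 P).eval x / x) atTop (𝓝 4) := by
    simpa [coeff_four_quartic, Nat.choose, hP] using
      tendsto_eval_hasseDeriv_div_pow_atTop (n := 1) (k := 3)
        (natDegree_quartic_le α β γ lam δ ϱ)
  have hsqrt : Tendsto
      (fun x ↦ √((hasseDeriv 1 P).eval x / x ^ 3 / ((hasseDeriv 3 P).eval x / x)))
      atTop (𝓝 1) := by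
    simpa using (hnum.div hden four_ne_zero).sqrt
  refine hsqrt.congr' ?_
  filter_upwards [eventually_gt_atTop 0] with x hx
  calc √((hasseDeriv 1 P).eval x / x ^ 3 / ((hasseDeriv 3 P).eval x / x))
    _ = √((hasseDeriv 1 P).eval x / (hasseDeriv 3 P).eval x / x ^ 2) := by
      congr 1
      field_simp
    _ = qfun α β γ lam δ ϱ x / x := by
      rw [Real.sqrt_div' _ (sq_nonneg x), Real.sqrt_sq hx.le, qfun_eq_sqrt_eval_hasseDeriv]

theorem tendsto_ffun_div_pow_four :
    Tendsto (fun x ↦ ffun α β γ lam δ ϱ x / x ^ 4) atTop (𝓝 (-4)) := by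
  have hratio : Tendsto (fun x : ℝ ↦ (x + qfun α β γ lam δ ϱ x * Complex.I) / x) atTop
      (𝓝 (1 + Complex.I)) := by
    have hq := (tendsto_qfun_div_self α β γ lam δ ϱ).ofReal
    have hsum : Tendsto (fun x : ℝ ↦ 1 + ((qfun α β γ lam δ ϱ x / x : ℝ) : ℂ) * Complex.I) atTop
        (𝓝 (1 + Complex.I)) := by
      simpa using (hq.mul_const Complex.I).const_add 1
    refine hsum.congr' ?_
    filter_upwards [eventually_ne_atTop 0] with x hx
    rw [add_div, div_self (Complex.ofReal_ne_zero.mpr hx), Complex.ofReal_div, div_mul_eq_mul_div]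
  have hre := (Complex.continuous_re.tendsto _).comp
    (tendsto_aeval_div_pow (natDegree_quartic_le α β γ lam δ ϱ)
      (RCLike.tendsto_ofReal_atTop_cobounded ℂ) hratio)
  have hpow : (1 + Complex.I) ^ 4 = ((-4 : ℝ) : ℂ) := by
    apply Complex.ext <;> norm_num [pow_succ]
  rw [coeff_four_quartic, map_one, one_mul, hpow, Complex.ofReal_re] at hre
  refine hre.congr fun x ↦ ?_
  rw [ffun_eq_re_aeval_quartic, ← Complex.div_ofReal_re, Complex.ofReal_pow]
  rfl

theorem f_tendsto_atBot_general : Tendsto (ffun α β γ lam δ ϱ) atTop atBot := by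
  have hprod := (tendsto_ffun_div_pow_four α β γ lam δ ϱ).neg_mul_atTop (by norm_num)
    (tendsto_pow_atTop four_ne_zero)
  refine hprod.congr' ?_
  filter_upwards [eventually_ne_atTop 0] with x hx
  exact div_mul_cancel₀ _ (pow_ne_zero 4 hx)

end

/-- `f(x) → -∞` as `x → +∞`. -/
theorem f_tendsto_atBot (α β γ lam δ ϱ : ℝ) (hα : 0 < α) (hβ : 0 < β) (hγ : 0 < γ)
    (hlam : 0 < lam) (hδ : 0 < δ) (hϱ₀ : 0 < ϱ) (hϱ₂ : ϱ < β) :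
    Filter.Tendsto (ffun α β γ lam δ ϱ) Filter.atTop Filter.atBot :=
  f_tendsto_atBot_general α β γ lam δ ϱ
end

section
/- Let α, β, γ, λ be strictly positive real numbers and 0 < ϱ < β. For each δ > 0 write f_δ(0) = γδλ + q_δ(0)⁴ − (αδ + βλ)·q_δ(0)², where q_δ(0)² = λ(γ + δβ − ϱδ)/(α + δ). Then f_δ(0)/δ converges to λ(γ − αβ + αϱ) as δ → +∞. In particular, if moreover ϱ > β − γ/α, then there exists δ₀ > 0 such that f_δ(0) > 0 for every δ ≥ δ₀. -/
/-- The value `q_δ(0) = sqrt(λ(γ + δβ − ϱδ)/(α + δ))`. -/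
noncomputable def qzero (α β γ lam ϱ δ : ℝ) : ℝ :=
  Real.sqrt (lam * (γ + δ * β - ϱ * δ) / (α + δ))

/-- The value `f_δ(0) = γδλ + q_δ(0)⁴ − (αδ + βλ)·q_δ(0)²`. -/
noncomputable def fzero (α β γ lam ϱ δ : ℝ) : ℝ :=
  γ * δ * lam + (qzero α β γ lam ϱ δ) ^ 4 - (α * δ + β * lam) * (qzero α β γ lam ϱ δ) ^ 2

/-!
As `δ → ∞`, the number `q_δ(0)` converges to `√(λ(β − ϱ))`, so in `f_δ(0)` only the terms
`γδλ` and `αδ·q_δ(0)²` are of order `δ`, and `f_δ(0)/δ → γλ − α·λ(β − ϱ)`. Since the square root is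
continuous everywhere, `q_δ(0)` need only be squared in the limit, where its radicand is
`λ(β − ϱ) > 0`.
-/

open Filter Topology

section OrderedField

variable {𝕜 : Type*} [Field 𝕜] [LinearOrder 𝕜] [IsStrictOrderedRing 𝕜] [TopologicalSpace 𝕜]
  [OrderTopology 𝕜]

theorem tendsto_add_mul_div_add_atTop (a b c : 𝕜) :
    Tendsto (fun x => (a + b * x) / (c + x)) atTop (𝓝 b) := by
  have hden : Tendsto (fun x => c + x) atTop atTop := tendsto_atTop_add_const_left _ c tendsto_id
  have hrem : Tendsto (fun x => b + (a - b * c) / (c + x)) atTop (𝓝 b) := by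
    simpa only [add_zero] using (hden.const_div_atTop (a - b * c)).const_add b
  refine hrem.congr' ?_
  filter_upwards [hden.eventually_ne_atTop 0] with x hx
  field_simp
  ring

theorem eventually_pos_of_tendsto_div_atTop {f : 𝕜 → 𝕜} {c : 𝕜} (hc : 0 < c)
    (hf : Tendsto (fun x => f x / x) atTop (𝓝 c)) : ∀ᶠ x in atTop, 0 < f x := by
  filter_upwards [hf.eventually_const_lt hc, eventually_gt_atTop 0] with x hfx hx
  exact (div_pos_iff_of_pos_right hx).1 hfx

end OrderedField

theorem tendsto_qzero_atTop (α β γ lam ϱ : ℝ) :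
    Tendsto (qzero α β γ lam ϱ) atTop (𝓝 √(lam * (β - ϱ))) := by
  refine (tendsto_add_mul_div_add_atTop (lam * γ) (lam * (β - ϱ)) α).sqrt.congr fun δ => ?_
  have hnum : lam * γ + lam * (β - ϱ) * δ = lam * (γ + δ * β - ϱ * δ) := by ring
  rw [qzero, hnum]

theorem fzero_div_eq (α β γ lam ϱ : ℝ) {δ : ℝ} (hδ : δ ≠ 0) :
    fzero α β γ lam ϱ δ / δ = γ * lam + qzero α β γ lam ϱ δ ^ 4 / δ
      - (α + β * lam / δ) * qzero α β γ lam ϱ δ ^ 2 := by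
  rw [fzero]
  field_simp

theorem tendsto_fzero_div_atTop (α β γ lam ϱ : ℝ) :
    Tendsto (fun δ => fzero α β γ lam ϱ δ / δ) atTop
      (𝓝 (γ * lam - α * √(lam * (β - ϱ)) ^ 2)) := by
  have hq := tendsto_qzero_atTop α β γ lam ϱ
  have hquartic : Tendsto (fun δ => qzero α β γ lam ϱ δ ^ 4 / δ) atTop (𝓝 0) :=
    (hq.pow 4).div_atTop tendsto_id
  have hcoeff : Tendsto (fun δ => α + β * lam / δ) atTop (𝓝 α) := by
    simpa only [add_zero, id_eq] using (tendsto_id.const_div_atTop (β * lam)).const_add α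
  have hlim := (hquartic.const_add (γ * lam)).sub (hcoeff.mul (hq.pow 2))
  rw [add_zero] at hlim
  refine hlim.congr' ?_
  filter_upwards [eventually_ne_atTop 0] with δ hδ
  exact (fzero_div_eq α β γ lam ϱ hδ).symm

theorem fzero_asymptotics_general (α β γ lam ϱ : ℝ) (hq : 0 < lam * (β - ϱ)) :
    Tendsto (fun δ => fzero α β γ lam ϱ δ / δ) atTop (𝓝 (lam * (γ - α * β + α * ϱ))) ∧
    (0 < lam * (γ - α * β + α * ϱ) → ∃ δ₀ > 0, ∀ δ ≥ δ₀, 0 < fzero α β γ lam ϱ δ) := by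
  have hlim : Tendsto (fun δ => fzero α β γ lam ϱ δ / δ) atTop
      (𝓝 (lam * (γ - α * β + α * ϱ))) := by
    convert tendsto_fzero_div_atTop α β γ lam ϱ using 2
    rw [Real.sq_sqrt hq.le]
    ring
  refine ⟨hlim, fun hpos => ?_⟩
  obtain ⟨δ₀, hδ₀⟩ := ((eventually_gt_atTop 0).and
    (eventually_pos_of_tendsto_div_atTop hpos hlim)).exists_forall_of_atTop
  exact ⟨δ₀, (hδ₀ δ₀ le_rfl).1, fun δ hδ => (hδ₀ δ hδ).2⟩

/-- `f_δ(0)/δ → λ(γ − αβ + αϱ)` as `δ → +∞`; in particular, if `ϱ > β − γ/α`, then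
`f_δ(0) > 0` for all sufficiently large `δ`. -/
theorem fzero_asymptotics (α β γ lam ϱ : ℝ) (hα : 0 < α) (hβ : 0 < β) (hγ : 0 < γ)
    (hlam : 0 < lam) (hϱ₀ : 0 < ϱ) (hϱ₂ : ϱ < β) :
    Filter.Tendsto (fun δ : ℝ => fzero α β γ lam ϱ δ / δ) Filter.atTop
      (nhds (lam * (γ - α * β + α * ϱ))) ∧
    (β - γ / α < ϱ → ∃ δ₀ > 0, ∀ δ ≥ δ₀, 0 < fzero α β γ lam ϱ δ) := by
  refine (fzero_asymptotics_general α β γ lam ϱ (mul_pos hlam (sub_pos.2 hϱ₂))).imp_right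
    fun hpos hϱ => hpos (mul_pos hlam ?_)
  linarith [(lt_div_iff₀' hα).1 (sub_lt_comm.1 hϱ)]
end

section
/- Let α, β, γ, λ, δ be strictly positive real numbers with γ ≤ αβ and 0 < ϱ < β. Then for every p ≥ 0, writing q = q(p), one has the identity q³ − 3p²q − 2αpq − βλq = −q·(8p³ + 8αp² + 2α²p + 2βλp + λϱδ + λ(αβ − γ))/(α + δ + 4p), and this quantity is strictly negative. -/
/-!
Write `N / D` for the radicand defining `q = q(p)`, with `D = α + δ + 4p`. Once `N > 0`, we have
`q > 0` and `D q² = N`, hence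
`D (q³ - (3p² + 2αp + βλ) q) = -q (D (3p² + 2αp + βλ) - N)`.
As polynomials in `p`, both `N` and the last bracket have nonnegative coefficients apart from
their constant terms `λ (γ + βδ - ϱδ)` and `λ (αβ + ϱδ - γ)`, so both are positive on `p ≥ 0` as
soon as these two constants are.
-/

/-- The numerator `N` of the radicand defining `qfun`. -/
def qfunNumerator (α β γ lam δ ϱ x : ℝ) : ℝ :=
  4 * x ^ 3 + 3 * (α + δ) * x ^ 2 + 2 * (α * δ + β * lam) * x + lam * (γ + δ * β - ϱ * δ)

/-- The polynomial by which `-q / (α + δ + 4 * x)` is multiplied in the factorization of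
`q³ - 3x²q - 2αxq - βλq` at `q = q(x)`. -/
def denominatorCofactor (α β γ lam δ ϱ x : ℝ) : ℝ :=
  8 * x ^ 3 + 8 * α * x ^ 2 + 2 * α ^ 2 * x + 2 * β * lam * x + lam * ϱ * δ + lam * (α * β - γ)

section

variable {α β γ lam δ ϱ x : ℝ}

lemma denominatorCofactor_eq_mul_sub_qfunNumerator :
    denominatorCofactor α β γ lam δ ϱ x =
      (α + δ + 4 * x) * (3 * x ^ 2 + 2 * α * x + β * lam) - qfunNumerator α β γ lam δ ϱ x := by
  unfold denominatorCofactor qfunNumerator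
  ring

lemma qfunNumerator_pos (hα : 0 ≤ α) (hβ : 0 ≤ β) (hlam : 0 < lam) (hδ : 0 ≤ δ)
    (hϱ : ϱ * δ < γ + δ * β) (hx : 0 ≤ x) : 0 < qfunNumerator α β γ lam δ ϱ x := by
  have hconst : 0 < lam * (γ + δ * β - ϱ * δ) := mul_pos hlam (sub_pos.mpr hϱ)
  exact add_pos_of_nonneg_of_pos (by positivity) hconst

lemma denominatorCofactor_pos (hα : 0 ≤ α) (hβ : 0 ≤ β) (hlam : 0 < lam)
    (hγ : γ < α * β + ϱ * δ) (hx : 0 ≤ x) : 0 < denominatorCofactor α β γ lam δ ϱ x := by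
  have hconst : 0 < lam * (α * β + ϱ * δ - γ) := mul_pos hlam (sub_pos.mpr hγ)
  calc
    0 < 8 * x ^ 3 + 8 * α * x ^ 2 + 2 * α ^ 2 * x + 2 * β * lam * x
          + lam * (α * β + ϱ * δ - γ) :=
      add_pos_of_nonneg_of_pos (by positivity) hconst
    _ = denominatorCofactor α β γ lam δ ϱ x := by
      unfold denominatorCofactor
      ring

lemma qfun_pos (hD : 0 < α + δ + 4 * x) (hN : 0 < qfunNumerator α β γ lam δ ϱ x) :
    0 < qfun α β γ lam δ ϱ x :=
  Real.sqrt_pos.mpr (div_pos hN hD)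

lemma mul_qfun_sq (hD : 0 < α + δ + 4 * x) (hN : 0 ≤ qfunNumerator α β γ lam δ ϱ x) :
    (α + δ + 4 * x) * qfun α β γ lam δ ϱ x ^ 2 = qfunNumerator α β γ lam δ ϱ x := by
  have hsq : qfun α β γ lam δ ϱ x ^ 2 = qfunNumerator α β γ lam δ ϱ x / (α + δ + 4 * x) :=
    Real.sq_sqrt (div_nonneg hN hD.le)
  rw [hsq, mul_div_cancel₀ _ hD.ne']

lemma cubic_eq_neg_mul_denominatorCofactor_div {q : ℝ} (hD : α + δ + 4 * x ≠ 0)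
    (hq : (α + δ + 4 * x) * q ^ 2 = qfunNumerator α β γ lam δ ϱ x) :
    q ^ 3 - 3 * x ^ 2 * q - 2 * α * x * q - β * lam * q =
      -q * denominatorCofactor α β γ lam δ ϱ x / (α + δ + 4 * x) := by
  rw [eq_div_iff hD, denominatorCofactor_eq_mul_sub_qfunNumerator, ← hq]
  ring

end

theorem denominator_negative_general {α β γ lam δ ϱ p : ℝ} (hα : 0 ≤ α) (hβ : 0 ≤ β)
    (hlam : 0 < lam) (hδ : 0 < δ) (hγ : γ < α * β + ϱ * δ) (hϱ : ϱ * δ < γ + δ * β)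
    (hp : 0 ≤ p) :
    (qfun α β γ lam δ ϱ p) ^ 3 - 3 * p ^ 2 * qfun α β γ lam δ ϱ p
          - 2 * α * p * qfun α β γ lam δ ϱ p - β * lam * qfun α β γ lam δ ϱ p
        = -(qfun α β γ lam δ ϱ p) * denominatorCofactor α β γ lam δ ϱ p / (α + δ + 4 * p) ∧
      (qfun α β γ lam δ ϱ p) ^ 3 - 3 * p ^ 2 * qfun α β γ lam δ ϱ p
          - 2 * α * p * qfun α β γ lam δ ϱ p - β * lam * qfun α β γ lam δ ϱ p < 0 := by
  have hD : 0 < α + δ + 4 * p := by positivity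
  have hN := qfunNumerator_pos hα hβ hlam hδ.le hϱ hp
  have hfactor := cubic_eq_neg_mul_denominatorCofactor_div hD.ne' (mul_qfun_sq hD hN.le)
  refine ⟨hfactor, hfactor.trans_lt (div_neg_of_neg_of_pos ?_ hD)⟩
  exact mul_neg_of_neg_of_pos (neg_lt_zero.mpr (qfun_pos hD hN))
    (denominatorCofactor_pos hα hβ hlam hγ hp)

/-- For every `p ≥ 0`, writing `q = q(p)`, one has the identity
`q³ − 3p²q − 2αpq − βλq = −q(8p³ + 8αp² + 2α²p + 2βλp + λϱδ + λ(αβ−γ))/(α+δ+4p)`,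
and this quantity is strictly negative. -/
theorem denominator_negative (α β γ lam δ ϱ : ℝ) (hα : 0 < α) (hβ : 0 < β) (hγ : 0 < γ)
    (hlam : 0 < lam) (hδ : 0 < δ) (hγαβ : γ ≤ α * β) (hϱ₀ : 0 < ϱ) (hϱ₂ : ϱ < β) :
    ∀ p : ℝ, 0 ≤ p →
      (qfun α β γ lam δ ϱ p) ^ 3 - 3 * p ^ 2 * qfun α β γ lam δ ϱ p
          - 2 * α * p * qfun α β γ lam δ ϱ p - β * lam * qfun α β γ lam δ ϱ p
        = -(qfun α β γ lam δ ϱ p) * (8 * p ^ 3 + 8 * α * p ^ 2 + 2 * α ^ 2 * p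
            + 2 * β * lam * p + lam * ϱ * δ + lam * (α * β - γ)) / (α + δ + 4 * p) ∧
      (qfun α β γ lam δ ϱ p) ^ 3 - 3 * p ^ 2 * qfun α β γ lam δ ϱ p
          - 2 * α * p * qfun α β γ lam δ ϱ p - β * lam * qfun α β γ lam δ ϱ p < 0 := by
  exact fun p hp ↦ denominator_negative_general hα.le hβ.le hlam hδ
    (by linarith [mul_pos hϱ₀ hδ]) (by linarith [mul_lt_mul_of_pos_right hϱ₂ hδ]) hp
end

section
/- Let H be a real Hilbert space, A : H → H a continuous linear operator, and α, β, γ, ϱ, δ > 0. Suppose u : ℝ → H is four times continuously differentiable, satisfies on [0,∞) the fourth-order equation u''''(t) + (α+δ)u'''(t) + αδ·u''(t) + β·A u''(t) + (γ + δβ − ϱδ)·A u'(t) + γδ·A u(t) = 0, and satisfies the compatibility condition u'''(0) = −α·u''(0) − A(β·u'(0) + γ·u(0)). Then for every t ≥ 0, u'''(t) + α·u''(t) + β·A u'(t) + γ·A u(t) − ϱδ·∫₀ᵗ e^{−δ(t−s)} A u'(s) ds = 0. -/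
/-!
With `F = u''' + αu'' + βAu' + γAu`, the fourth-order equation is the factored equation
`F' + δF = ϱδ Au'`, and the compatibility condition is `F(0) = 0`. Duhamel's formula for this
first-order equation expresses `F` as the memory integral.
-/

section

variable {E : Type*} [NormedAddCommGroup E] [NormedSpace ℝ E]

theorem hasDerivAt_exp_neg_mul_sub (δ t s : ℝ) :
    HasDerivAt (fun s ↦ Real.exp (-δ * (t - s))) (Real.exp (-δ * (t - s)) * δ) s := by
  simpa using (((hasDerivAt_id s).const_sub t).const_mul (-δ)).exp

theorem eq_exp_smul_add_integral_of_hasDerivAt [CompleteSpace E] {f g : ℝ → E} {δ a t : ℝ}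
    (hf : ∀ s ∈ Set.uIcc a t, HasDerivAt f (g s - δ • f s) s)
    (hg : IntervalIntegrable g MeasureTheory.volume a t) :
    f t = Real.exp (-δ * (t - a)) • f a + ∫ s in a..t, Real.exp (-δ * (t - s)) • g s := by
  have hderiv : ∀ s ∈ Set.uIcc a t, HasDerivAt (fun s ↦ Real.exp (-δ * (t - s)) • f s)
      (Real.exp (-δ * (t - s)) • g s) s := fun s hs ↦
    ((hasDerivAt_exp_neg_mul_sub δ t s).smul (hf s hs)).congr_deriv (by module)
  have hint : IntervalIntegrable (fun s ↦ Real.exp (-δ * (t - s)) • g s)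
      MeasureTheory.volume a t := hg.continuousOn_smul (by fun_prop)
  rw [intervalIntegral.integral_eq_sub_of_hasDerivAt hderiv hint]
  simp

/-- The memoryless Moore–Gibson–Thompson operator `u''' + αu'' + βAu' + γAu`, which the equation
with memory sets equal to the memory integral. -/
noncomputable def mgtOperator (A : E →L[ℝ] E) (α β γ : ℝ) (u : ℝ → E) (t : ℝ) : E :=
  iteratedDeriv 3 u t + α • iteratedDeriv 2 u t + β • A (deriv u t) + γ • A (u t)

theorem hasDerivAt_mgtOperator (A : E →L[ℝ] E) (α β γ : ℝ) {u : ℝ → E} {t : ℝ}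
    (hu : ∀ n < 4, DifferentiableAt ℝ (iteratedDeriv n u) t) :
    HasDerivAt (mgtOperator A α β γ u)
      (iteratedDeriv 4 u t + α • iteratedDeriv 3 u t + β • A (iteratedDeriv 2 u t)
        + γ • A (deriv u t)) t := by
  have hderiv (n : ℕ) (hn : n < 4) :
      HasDerivAt (iteratedDeriv n u) (iteratedDeriv (n + 1) u t) t := by
    simpa only [iteratedDeriv_succ] using (hu n hn).hasDerivAt
  have h₀ : HasDerivAt u (deriv u t) t := by
    simpa only [iteratedDeriv_zero, zero_add, iteratedDeriv_one] using hderiv 0 (by norm_num)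
  have h₁ : HasDerivAt (deriv u) (iteratedDeriv 2 u t) t := by
    simpa only [iteratedDeriv_one] using hderiv 1 (by norm_num)
  have h₂ := hderiv 2 (by norm_num)
  have h₃ := hderiv 3 (by norm_num)
  exact ((h₃.add (h₂.const_smul α)).add ((A.hasFDerivAt.comp_hasDerivAt t h₁).const_smul β)).add
    ((A.hasFDerivAt.comp_hasDerivAt t h₀).const_smul γ)

theorem fourth_order_to_memory_general [CompleteSpace E] (A : E →L[ℝ] E) (α β γ ϱ δ : ℝ)
    (u : ℝ → E) (hu : ∀ n < 4, ∀ t : ℝ, 0 ≤ t → DifferentiableAt ℝ (iteratedDeriv n u) t)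
    (heq : ∀ t : ℝ, 0 ≤ t →
      iteratedDeriv 4 u t + (α + δ) • iteratedDeriv 3 u t + (α * δ) • iteratedDeriv 2 u t
        + β • A (iteratedDeriv 2 u t) + (γ + δ * β - ϱ * δ) • A (deriv u t)
        + (γ * δ) • A (u t) = 0)
    (hic : iteratedDeriv 3 u 0 = -(α • iteratedDeriv 2 u 0) - A (β • deriv u 0 + γ • u 0))
    (t : ℝ) (ht : 0 ≤ t) :
    iteratedDeriv 3 u t + α • iteratedDeriv 2 u t + β • A (deriv u t) + γ • A (u t)
      - (ϱ * δ) • ∫ s in (0 : ℝ)..t, Real.exp (-δ * (t - s)) • A (deriv u s) = 0 := by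
  set F := mgtOperator A α β γ u with hF
  have hF_zero : F 0 = 0 := by
    simp only [hF, mgtOperator, hic, map_add, map_smul]
    module
  have hF_deriv : ∀ s : ℝ, 0 ≤ s → HasDerivAt F ((ϱ * δ) • A (deriv u s) - δ • F s) s := by
    intro s hs
    refine (hasDerivAt_mgtOperator A α β γ fun n hn ↦ hu n hn s hs).congr_deriv ?_
    rw [← sub_eq_zero, ← heq s hs, hF, mgtOperator]
    module
  have hnonneg : ∀ s ∈ Set.uIcc 0 t, 0 ≤ s := fun s hs ↦ (Set.uIcc_of_le ht ▸ hs).1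
  have hu'_cont : ContinuousOn (deriv u) (Set.uIcc 0 t) := by
    rw [← iteratedDeriv_one]
    exact fun s hs ↦ (hu 1 (by norm_num) s (hnonneg s hs)).continuousAt.continuousWithinAt
  have hforcing : IntervalIntegrable (fun s ↦ (ϱ * δ) • A (deriv u s)) MeasureTheory.volume 0 t :=
    ((A.continuous.comp_continuousOn hu'_cont).const_smul (ϱ * δ)).intervalIntegrable
  have hduhamel :=
    eq_exp_smul_add_integral_of_hasDerivAt (fun s hs ↦ hF_deriv s (hnonneg s hs)) hforcing
  simp only [hF_zero, smul_zero, zero_add, smul_comm _ (ϱ * δ),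
    intervalIntegral.integral_smul] at hduhamel
  exact sub_eq_zero.mpr hduhamel

end

/-- If `u` solves the fourth-order equation on `[0,∞)` and satisfies the compatibility
condition `u'''(0) = −αu''(0) − A(βu'(0) + γu(0))`, then `u` solves the MGT equation with
exponential memory kernel of type II. -/
theorem fourth_order_to_memory {H : Type*} [NormedAddCommGroup H] [InnerProductSpace ℝ H]
    [CompleteSpace H] (A : H →L[ℝ] H) (α β γ ϱ δ : ℝ)
    (hα : 0 < α) (hβ : 0 < β) (hγ : 0 < γ) (hϱ : 0 < ϱ) (hδ : 0 < δ)
    (u : ℝ → H) (hu : ContDiff ℝ 4 u)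
    (heq : ∀ t : ℝ, 0 ≤ t →
      iteratedDeriv 4 u t + (α + δ) • iteratedDeriv 3 u t + (α * δ) • iteratedDeriv 2 u t
        + β • A (iteratedDeriv 2 u t) + (γ + δ * β - ϱ * δ) • A (deriv u t)
        + (γ * δ) • A (u t) = 0)
    (hic : iteratedDeriv 3 u 0 = -(α • iteratedDeriv 2 u 0) - A (β • deriv u 0 + γ • u 0)) :
    ∀ t : ℝ, 0 ≤ t →
      iteratedDeriv 3 u t + α • iteratedDeriv 2 u t + β • A (deriv u t) + γ • A (u t)
        - (ϱ * δ) • ∫ s in (0 : ℝ)..t, Real.exp (-δ * (t - s)) • A (deriv u s) = 0 := by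
  exact fourth_order_to_memory_general A α β γ ϱ δ u
    (fun n hn t _ ↦ hu.differentiable_iteratedDeriv n (mod_cast hn) t) heq hic
end

section
/- Let H be a real Hilbert space, A : H → H a continuous self-adjoint linear operator, λ > 0, and w ∈ H with ‖w‖ = 1 and A w = λ·w. Let α, β, γ > 0 satisfy γ ≤ αβ, and let ϱ ∈ (β − γ/α, β). Then there exists δ₀ > 0 such that for every δ ≥ δ₀ there exist ε > 0, an infinitely differentiable function u : ℝ → H, and a strictly increasing sequence (tₙ) of positive reals tending to +∞, such that u satisfies, for every t ≥ 0, the equation u'''(t) + α·u''(t) + β·A u'(t) + γ·A u(t) − ϱδ·∫₀ᵗ e^{−δ(t−s)} A u'(s) ds = 0, and moreover ⟨A u(tₙ), u(tₙ)⟩ ≥ λ·e^{ε·tₙ} for every n. -/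
open scoped RealInnerProductSpace

/-!
On the eigenline `ℝ w` the problem is scalar. For a mode `Re (c e^{zt})` the memory integral is
`Re (c z / (z + δ) (e^{zt} - e^{-δt}))`, so the mode solves the equation as soon as `z` is a root of
`(z + δ) (z³ + α z² + β lam z + γ lam) - ϱ δ lam z` and the phase of `c` is chosen so that the
transient `e^{-δt}` drops out.

The Hurwitz determinant of this quartic is a cubic in `δ` with leading coefficient
`lam (α (β - ϱ) - γ) < 0`, so for large `δ` the quartic has a root in the right half-plane. Its
coefficients are nonnegative, so this root is not real, and the mode attains its full amplitude
`‖c‖ e^{(Re z) t}` at a periodic sequence of times.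
-/

section Quartic

open Filter Polynomial

lemma exists_pos_isRoot_of_eval_zero_neg_s9 {p : ℝ[X]} (hlead : 0 ≤ p.leadingCoeff)
    (hzero : p.eval 0 < 0) : ∃ x, 0 < x ∧ p.IsRoot x := by
  have hdeg : 0 < p.degree := by
    by_contra! hle
    rw [eq_C_of_degree_le_zero hle, leadingCoeff_C] at hlead
    rw [← coeff_zero_eq_eval_zero] at hzero
    exact hzero.not_ge hlead
  have hlim := p.tendsto_atTop_of_leadingCoeff_nonneg hdeg hlead
  obtain ⟨M, hM, hpM⟩ := ((eventually_gt_atTop 0).and (hlim.eventually_gt_atTop 0)).exists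
  obtain ⟨x, hx, hroot⟩ := intermediate_value_Ioo hM.le p.continuous.continuousOn ⟨hzero, hpM⟩
  exact ⟨x, hx.1, hroot⟩

lemma exists_quadratic_root_re_pos {p : ℂ} (hp : 0 < p.re) (q : ℂ) :
    ∃ z : ℂ, 0 < z.re ∧ z ^ 2 - p * z + q = 0 := by
  obtain ⟨r, hr⟩ : ∃ r : ℂ, 1 * (r * r) + -p * r + q = 0 :=
    exists_quadratic_eq_zero one_ne_zero (IsAlgClosed.exists_eq_mul_self _)
  rcases lt_or_ge 0 r.re with hpos | hnonpos
  · exact ⟨r, hpos, by linear_combination hr⟩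
  · refine ⟨p - r, ?_, by linear_combination hr⟩
    rw [Complex.sub_re]
    linarith

/-- The Hurwitz determinant of the monic quartic `z⁴ + a z³ + b z² + c z + d`. It is the product of
the sums of pairs of roots, and its sign detects roots in the right half-plane. -/
def quarticHurwitzDet (a b c d : ℝ) : ℝ :=
  a * b * c - c ^ 2 - a ^ 2 * d

/-- The resolvent whose roots `x` are the sums of two roots of `z⁴ + a z³ + b z² + c z + d`. In a
factorization `(z² - x z + q) (z² + (a + x) z + s)` the coefficients of `z²` and `z` determine `q`
and `s`; the resolvent is the remaining condition `q s = d` with denominators `(a + 2 x)²` cleared.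
-/
noncomputable def quarticResolvent (a b c d : ℝ) : ℝ[X] :=
  (X * (X ^ 2 + C a * X + C b) + C c) * ((X + C a) * (X ^ 2 + C a * X + C b) - C c) -
    C d * (2 * X + C a) ^ 2

variable {a b c d : ℝ}

lemma monic_quarticResolvent : (quarticResolvent a b c d).Monic := by
  unfold quarticResolvent
  monicity!

lemma eval_zero_quarticResolvent :
    (quarticResolvent a b c d).eval 0 = quarticHurwitzDet a b c d := by
  simp only [quarticResolvent, quarticHurwitzDet, eval_sub, eval_mul, eval_add, eval_pow, eval_X,
    eval_C, eval_ofNat]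
  ring

lemma exists_quartic_factorization_of_isRoot_resolvent {x : ℝ} (hx : a + 2 * x ≠ 0)
    (hroot : (quarticResolvent a b c d).IsRoot x) :
    ∃ q s : ℝ, ∀ z : ℂ, z ^ 4 + a * z ^ 3 + b * z ^ 2 + c * z + d =
      (z ^ 2 - x * z + q) * (z ^ 2 + (a + x) * z + s) := by
  simp only [quarticResolvent, IsRoot.def, eval_sub, eval_mul, eval_add, eval_pow, eval_X, eval_C,
    eval_ofNat] at hroot
  let σ := x ^ 2 + a * x + b
  let q := (x * σ + c) / (a + 2 * x)
  let s := ((x + a) * σ - c) / (a + 2 * x)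
  have hq : q * (a + 2 * x) = x * σ + c := div_mul_cancel₀ _ hx
  have hs : s * (a + 2 * x) = (x + a) * σ - c := div_mul_cancel₀ _ hx
  have hsum : q + s = x ^ 2 + a * x + b := mul_right_cancel₀ hx (by linear_combination hq + hs)
  have hlin : (a + x) * q - x * s = c :=
    mul_right_cancel₀ hx (by linear_combination (a + x) * hq - x * hs)
  have hprod : q * s = d := by
    refine mul_right_cancel₀ (pow_ne_zero 2 hx) ?_
    linear_combination s * (a + 2 * x) * hq + (x * σ + c) * hs + hroot
  refine ⟨q, s, fun z => ?_⟩
  have hsum' : (q : ℂ) + s = x ^ 2 + a * x + b := by exact_mod_cast hsum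
  rw [← hprod, ← hlin]
  push_cast
  linear_combination (-z ^ 2) * hsum'

lemma exists_quartic_root_of_hurwitzDet_neg (ha : 0 ≤ a) (hb : 0 ≤ b) (hc : 0 ≤ c) (hd : 0 ≤ d)
    (hdet : quarticHurwitzDet a b c d < 0) :
    ∃ z : ℂ, 0 < z.re ∧ 0 < z.im ∧ z ^ 4 + a * z ^ 3 + b * z ^ 2 + c * z + d = 0 := by
  obtain ⟨x, hx, hresolvent⟩ := exists_pos_isRoot_of_eval_zero_neg_s9
    (monic_quarticResolvent.leadingCoeff ▸ zero_le_one) (eval_zero_quarticResolvent.trans_lt hdet)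
  obtain ⟨q, s, hfactor⟩ :=
    exists_quartic_factorization_of_isRoot_resolvent (by positivity) hresolvent
  obtain ⟨z, hre, hz⟩ := exists_quadratic_root_re_pos (p := x) (by simpa using hx) q
  have hroot : z ^ 4 + a * z ^ 3 + b * z ^ 2 + c * z + d = 0 := by rw [hfactor, hz, zero_mul]
  rcases lt_trichotomy z.im 0 with him | him | him
  · refine ⟨starRingEnd ℂ z, by simpa using hre, by simpa using him, ?_⟩
    simpa using congrArg (starRingEnd ℂ) hroot
  · obtain ⟨y, rfl⟩ : ∃ y : ℝ, (y : ℂ) = z := ⟨z.re, Complex.ext rfl (by simp [him])⟩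
    rw [Complex.ofReal_re] at hre
    have hpos : 0 < y ^ 4 + a * y ^ 3 + b * y ^ 2 + c * y + d := by positivity
    exact absurd (by exact_mod_cast hroot) hpos.ne'
  · exact ⟨z, hre, him, hroot⟩

lemma eventually_cubic_neg_s9 (ha : a < 0) :
    ∀ᶠ x in atTop, a * x ^ 3 + b * x ^ 2 + c * x + d < 0 := by
  have hlim := tendsto_atBot_of_leadingCoeff_nonpos (C a * X ^ 3 + C b * X ^ 2 + C c * X + C d)
    (by rw [degree_cubic ha.ne]; norm_num) (by rw [leadingCoeff_cubic ha.ne]; exact ha.le)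
  simpa using hlim.eventually_lt_atBot 0

end Quartic

section CharacteristicRoot

open Filter

variable {α β γ ϱ lam : ℝ}

lemma eventually_mgt_hurwitzDet_neg (hlam : 0 < lam) (h : α * (β - ϱ) < γ) :
    ∀ᶠ δ in atTop, quarticHurwitzDet (α + δ) (α * δ + β * lam)
      (lam * (δ * (β - ϱ) + γ)) (γ * lam * δ) < 0 := by
  filter_upwards [eventually_cubic_neg_s9 (a := lam * (α * (β - ϱ) - γ))
    (b := lam * ((α ^ 2 + β * lam) * (β - ϱ) - lam * (β - ϱ) ^ 2 - α * γ))
    (c := lam ^ 2 * (β * γ + (α * β - 2 * γ) * (β - ϱ)))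
    (d := lam ^ 2 * γ * (α * β - γ))
    (mul_neg_of_pos_of_neg hlam (sub_neg.mpr h))] with δ hδ
  unfold quarticHurwitzDet
  linear_combination hδ

lemma eventually_exists_mgt_unstable_root (hlam : 0 < lam) (hα : 0 < α) (hϱ : ϱ ≤ β)
    (h : α * (β - ϱ) < γ) :
    ∀ᶠ δ : ℝ in atTop, ∃ z : ℂ, 0 < z.re ∧ 0 < z.im ∧
      (z + δ) * (z ^ 3 + α * z ^ 2 + β * lam * z + γ * lam) = ϱ * δ * lam * z := by
  have hm : 0 ≤ β - ϱ := sub_nonneg.mpr hϱ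
  have hγ : 0 < γ := (mul_nonneg hα.le hm).trans_lt h
  have hlim : Tendsto (fun δ => α * δ + β * lam) atTop atTop :=
    tendsto_atTop_add_const_right _ _ (tendsto_id.const_mul_atTop hα)
  filter_upwards [eventually_ge_atTop 0, hlim.eventually_ge_atTop 0,
    eventually_mgt_hurwitzDet_neg hlam h] with δ hδ hb hdet
  obtain ⟨z, hre, him, hz⟩ := exists_quartic_root_of_hurwitzDet_neg (by positivity) hb
    (by positivity) (by positivity) hdet
  refine ⟨z, hre, him, ?_⟩
  push_cast at hz
  linear_combination hz

end CharacteristicRoot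

section ExpMode

/-- The real mode `t ↦ Re (c e^{zt})` of complex amplitude `c` and complex frequency `z`, from which
the growing solution is built. Differentiation multiplies the amplitude by `z`. -/
noncomputable def expMode (c z : ℂ) (t : ℝ) : ℝ :=
  (c * Complex.exp (z * t)).re

variable {E : Type*} [NormedAddCommGroup E] [NormedSpace ℝ E]

lemma hasDerivAt_expMode (c z : ℂ) (t : ℝ) : HasDerivAt (expMode c z) (expMode (c * z) z t) t := by
  have hexp : HasDerivAt (fun y : ℂ => c * Complex.exp (z * y))
      (c * z * Complex.exp (z * t)) (t : ℂ) :=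
    (((hasDerivAt_id' (t : ℂ)).const_mul z).cexp.const_mul c).congr_deriv (by ring)
  exact hexp.real_of_complex

lemma contDiff_expMode {n : WithTop ℕ∞} (c z : ℂ) : ContDiff ℝ n (expMode c z) := by
  have hofReal : ContDiff ℝ n (fun t : ℝ => (t : ℂ)) := Complex.ofRealCLM.contDiff
  exact Complex.reCLM.contDiff.comp (contDiff_const.mul (contDiff_const.mul hofReal).cexp)

lemma iteratedDeriv_expMode_smul (c z : ℂ) (w : E) (k : ℕ) :
    iteratedDeriv k (fun t => expMode c z t • w) = fun t => expMode (c * z ^ k) z t • w := by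
  induction k with
  | zero => simp
  | succ k ih =>
    ext t
    rw [iteratedDeriv_succ, ih, ((hasDerivAt_expMode _ z t).smul_const w).deriv, pow_succ,
      mul_assoc]

lemma integral_exp_mul_expMode {c z : ℂ} {δ : ℝ} (hz : z + δ ≠ 0) (t : ℝ) :
    ∫ s in (0 : ℝ)..t, Real.exp (-δ * (t - s)) * expMode c z s =
      expMode (c / (z + δ)) z t - Real.exp (-δ * t) * (c / (z + δ)).re := by
  have hderiv (s : ℝ) : HasDerivAt
      (fun s => Real.exp (-δ * (t - s)) * expMode (c / (z + δ)) z s)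
      (Real.exp (-δ * (t - s)) * expMode c z s) s := by
    have hexp : HasDerivAt (fun s => Real.exp (-δ * (t - s)))
        (Real.exp (-δ * (t - s)) * δ) s :=
      (((hasDerivAt_id' s).const_sub t).const_mul (-δ)).exp.congr_deriv (by ring)
    refine (hexp.mul (hasDerivAt_expMode _ z s)).congr_deriv ?_
    have hamplitude : δ * expMode (c / (z + δ)) z s + expMode (c / (z + δ) * z) z s =
        expMode c z s := by
      simp only [expMode, ← Complex.re_ofReal_mul, ← Complex.add_re]
      congr 1
      field_simp
      ring
    rw [← hamplitude]
    ring
  have hcont : Continuous fun s => Real.exp (-δ * (t - s)) * expMode c z s := by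
    have hmode := (contDiff_expMode (n := 0) c z).continuous
    fun_prop
  rw [intervalIntegral.integral_eq_sub_of_hasDerivAt (fun s _ => hderiv s)
    (hcont.intervalIntegrable 0 t)]
  simp [expMode]

lemma expMode_eq_norm_mul_exp_mul_cos (c z : ℂ) (t : ℝ) :
    expMode c z t = ‖c‖ * Real.exp (z.re * t) * Real.cos (c.arg + z.im * t) := by
  rw [Real.cos_add, expMode, Complex.mul_re, Complex.exp_re, Complex.exp_im, Complex.re_mul_ofReal,
    Complex.im_mul_ofReal]
  linear_combination (-Real.exp (z.re * t) * Real.cos (z.im * t)) * Complex.norm_mul_cos_arg c +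
    (Real.exp (z.re * t) * Real.sin (z.im * t)) * Complex.norm_mul_sin_arg c

open Filter in
lemma exists_seq_expMode_eq_norm_mul_exp (c : ℂ) {z : ℂ} (hz : 0 < z.im) :
    ∃ τ : ℕ → ℝ, StrictMono τ ∧ (∀ n, 0 < τ n) ∧ Tendsto τ atTop atTop ∧
      ∀ n, expMode c z (τ n) = ‖c‖ * Real.exp (z.re * τ n) := by
  have hpi := Real.pi_pos
  refine ⟨fun n => ((n + 1 : ℕ) * (2 * Real.pi) - c.arg) / z.im, fun m n hmn => ?_, fun n => ?_, ?_,
    fun n => ?_⟩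
  · dsimp only
    gcongr
  · have harg := c.arg_le_pi
    have hn : 0 ≤ n * (2 * Real.pi) := by positivity
    refine div_pos ?_ hz
    push_cast
    linarith
  · refine Tendsto.atTop_div_const hz (tendsto_atTop_add_const_right _ _ ?_)
    exact (tendsto_natCast_atTop_atTop.comp (tendsto_add_atTop_nat 1)).atTop_mul_const
      (by positivity)
  · rw [expMode_eq_norm_mul_exp_mul_cos, mul_div_cancel₀ _ hz.ne', add_sub_cancel,
      Real.cos_nat_mul_two_pi, mul_one]

end ExpMode

section Solution

lemma exists_norm_eq_one_re_mul_eq_zero (v : ℂ) : ∃ c : ℂ, ‖c‖ = 1 ∧ (c * v).re = 0 := by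
  obtain ⟨c, hc, hcv⟩ := Complex.exists_norm_eq_mul_self v
  exact ⟨Complex.I * c, by simp [hc], by simp [mul_assoc, ← hcv]⟩

variable {E : Type*} [NormedAddCommGroup E] [NormedSpace ℝ E] [CompleteSpace E]

lemma mgt_equation_expMode_smul (A : E →ₗ[ℝ] E) {w : E} {lam : ℝ} (hAw : A w = lam • w)
    {α β γ ϱ δ : ℝ} {c z : ℂ} (hzδ : z + δ ≠ 0)
    (hchar : (z + δ) * (z ^ 3 + α * z ^ 2 + β * lam * z + γ * lam) = ϱ * δ * lam * z)
    (hc : (c * z / (z + δ)).re = 0) (t : ℝ) :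
    iteratedDeriv 3 (fun t => expMode c z t • w) t
        + α • iteratedDeriv 2 (fun t => expMode c z t • w) t
        + β • A (deriv (fun t => expMode c z t • w) t) + γ • A (expMode c z t • w)
        - (ϱ * δ) • ∫ s in (0 : ℝ)..t,
            Real.exp (-δ * (t - s)) • A (deriv (fun t => expMode c z t • w) s) = 0 := by
  have hscalar : expMode (c * z ^ 3) z t + α * expMode (c * z ^ 2) z t
      + β * lam * expMode (c * z) z t + γ * lam * expMode c z t
      - ϱ * δ * lam * expMode (c * z / (z + δ)) z t = 0 := by
    have hamplitude : c * z ^ 3 + α * (c * z ^ 2) + β * lam * (c * z) + γ * lam * c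
        - ϱ * δ * lam * (c * z / (z + δ)) = 0 := by
      field_simp
      linear_combination c * hchar
    have hre := congrArg (fun y : ℂ => (y * Complex.exp (z * t)).re) hamplitude
    simp only [zero_mul, Complex.zero_re] at hre
    rw [← hre]
    simp only [expMode, ← Complex.re_ofReal_mul, ← Complex.add_re, ← Complex.sub_re]
    congr 1
    push_cast
    ring
  simp only [← iteratedDeriv_one, iteratedDeriv_expMode_smul, map_smul, hAw, smul_smul, ← mul_assoc,
    intervalIntegral.integral_smul_const, intervalIntegral.integral_mul_const, pow_one,
    integral_exp_mul_expMode hzδ, hc, ← add_smul, ← sub_smul]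
  rw [smul_eq_zero]
  left
  linear_combination hscalar

end Solution

theorem mgt_memory_exponential_growth_general {H : Type*} [NormedAddCommGroup H]
    [InnerProductSpace ℝ H] [CompleteSpace H] (A : H →ₗ[ℝ] H) (lam : ℝ) (hlam : 0 < lam)
    (w : H) (hw : ‖w‖ = 1) (hAw : A w = lam • w) (α β γ : ℝ) (hα : 0 < α)
    (ϱ : ℝ) (hϱ₁ : β - γ / α < ϱ) (hϱ₂ : ϱ ≤ β) :
    ∃ δ₀ > 0, ∀ δ ≥ δ₀, ∃ ε > 0, ∃ u : ℝ → H, ContDiff ℝ (⊤ : ℕ∞) u ∧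
      ∃ tseq : ℕ → ℝ, StrictMono tseq ∧ (∀ n, 0 < tseq n) ∧
        Filter.Tendsto tseq Filter.atTop Filter.atTop ∧
        (∀ t : ℝ, 0 ≤ t →
          iteratedDeriv 3 u t + α • iteratedDeriv 2 u t + β • A (deriv u t) + γ • A (u t)
            - (ϱ * δ) • ∫ s in (0 : ℝ)..t, Real.exp (-δ * (t - s)) • A (deriv u s) = 0) ∧
        (∀ n : ℕ, lam * Real.exp (ε * tseq n) ≤ ⟪A (u (tseq n)), u (tseq n)⟫) := by
  have hγ : α * (β - ϱ) < γ := (lt_div_iff₀' hα).mp (sub_lt_comm.mp hϱ₁)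
  obtain ⟨δ₀, hδ₀, hroot⟩ := (Filter.atTop_basis' 1).eventually_iff.mp
    (eventually_exists_mgt_unstable_root hlam hα hϱ₂ hγ)
  refine ⟨δ₀, by positivity, fun δ hδ => ?_⟩
  obtain ⟨z, hre, him, hchar⟩ := hroot hδ
  have hzδ : z + δ ≠ 0 := fun h => him.ne' (by simpa using congrArg Complex.im h)
  obtain ⟨c, hc, hphase⟩ := exists_norm_eq_one_re_mul_eq_zero (z / (z + δ))
  rw [← mul_div_assoc] at hphase
  obtain ⟨τ, hmono, hpos, hlim, hτ⟩ := exists_seq_expMode_eq_norm_mul_exp c him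
  refine ⟨2 * z.re, by positivity, fun t => expMode c z t • w,
    (contDiff_expMode c z).smul contDiff_const, τ, hmono, hpos, hlim,
    fun t _ => mgt_equation_expMode_smul A hAw hzδ hchar hphase t, fun n => le_of_eq ?_⟩
  simp only [map_smul, hAw, real_inner_smul_left, real_inner_smul_right,
    real_inner_self_eq_norm_sq, hw, hτ, hc]
  rw [mul_assoc, two_mul, Real.exp_add]
  ring

/-- Exponential growth for the MGT equation with exponential memory kernel of type II:
for `ϱ ∈ (β − γ/α, β)` and all sufficiently large `δ`, there exists a smooth solution
whose energy grows exponentially fast along a sequence of times. -/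
theorem mgt_memory_exponential_growth {H : Type*} [NormedAddCommGroup H]
    [InnerProductSpace ℝ H] [CompleteSpace H] (A : H →L[ℝ] H)
    (hsa : ∀ x y : H, ⟪A x, y⟫ = ⟪x, A y⟫) (lam : ℝ) (hlam : 0 < lam)
    (w : H) (hw : ‖w‖ = 1) (hAw : A w = lam • w)
    (α β γ : ℝ) (hα : 0 < α) (hβ : 0 < β) (hγ : 0 < γ) (hγαβ : γ ≤ α * β)
    (ϱ : ℝ) (hϱ₁ : β - γ / α < ϱ) (hϱ₂ : ϱ < β) :
    ∃ δ₀ > 0, ∀ δ ≥ δ₀, ∃ ε > 0, ∃ u : ℝ → H, ContDiff ℝ (⊤ : ℕ∞) u ∧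
      ∃ tseq : ℕ → ℝ, StrictMono tseq ∧ (∀ n, 0 < tseq n) ∧
        Filter.Tendsto tseq Filter.atTop Filter.atTop ∧
        (∀ t : ℝ, 0 ≤ t →
          iteratedDeriv 3 u t + α • iteratedDeriv 2 u t + β • A (deriv u t) + γ • A (u t)
            - (ϱ * δ) • ∫ s in (0 : ℝ)..t, Real.exp (-δ * (t - s)) • A (deriv u s) = 0) ∧
        (∀ n : ℕ, lam * Real.exp (ε * tseq n) ≤ ⟪A (u (tseq n)), u (tseq n)⟫) :=
  mgt_memory_exponential_growth_general (A : H →ₗ[ℝ] H) lam hlam w hw hAw α β γ hα ϱ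
    hϱ₁ hϱ₂.le
end

section
/- Let H be a real Hilbert space, let g : [0,∞) → ℝ be continuously differentiable, let v : [0,∞) → H be continuously differentiable, and set G(t) = ∫₀ᵗ g(s) ds and Φ(t) = ∫₀ᵗ g(t−s)·‖v(t) − v(s)‖² ds − G(t)·‖v(t)‖². Then Φ is differentiable on (0,∞) and for every t > 0: −2·∫₀ᵗ g(t−s)·⟨v(s), v'(t)⟩ ds = Φ'(t) + g(t)·‖v(t)‖² − ∫₀ᵗ g'(t−s)·‖v(t) − v(s)‖² ds. -/
open scoped RealInnerProductSpace

/-!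
Expanding the square, the term `G ‖v‖²` cancels: `Φ = g * ‖v‖² - 2 ⟪v, g * v⟫`, where `*` is the
Volterra convolution on `[0, t]`. Since `(g * h)' = g' * h + g(0) h` for merely continuous `h`, the
product rule needs `v` to be differentiable only at the point `t`. The terms containing `g'`
recombine, by the same expansion with `g'` in place of `g`, into
`∫₀ᵗ g'(t-s) ‖v(t) - v(s)‖² ds - (g(t) - g(0)) ‖v(t)‖²`, and `g(0) ‖v(t)‖²` drops out.
-/

open MeasureTheory Set Topology UniformSpace

section LeibnizRule

variable {𝕜 E : Type*} [RCLike 𝕜] [NormedAddCommGroup E] [NormedSpace 𝕜 E]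

theorem hasDerivAt_diag_of_continuousAt {f f₁ f₂ : 𝕜 → 𝕜 → E} {t : 𝕜}
    (hf₁ : ∀ᶠ p in 𝓝 (t, t), HasDerivAt (f · p.2) (f₁ p.1 p.2) p.1)
    (hf₂ : ∀ᶠ p in 𝓝 (t, t), HasDerivAt (f p.1) (f₂ p.1 p.2) p.2)
    (hcf₁ : ContinuousAt f₁.uncurry (t, t)) (hcf₂ : ContinuousAt f₂.uncurry (t, t)) :
    HasDerivAt (fun x => f x x) (f₁ t t + f₂ t t) t := by
  have toSpan_continuous : Continuous fun e : E => ContinuousLinearMap.toSpanSingleton 𝕜 e :=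
    (ContinuousLinearMap.toSpanSingletonCLE (𝕜 := 𝕜) (E := E)).continuous
  have hf := hasStrictFDerivAt_uncurry_coprod (𝕜 := 𝕜) (f := f)
    (f₁ := fun x y => .toSpanSingleton 𝕜 (f₁ x y)) (f₂ := fun x y => .toSpanSingleton 𝕜 (f₂ x y))
    (hf₁.mono fun _ h => h.hasFDerivAt) (hf₂.mono fun _ h => h.hasFDerivAt)
    (toSpan_continuous.continuousAt.comp hcf₁) (toSpan_continuous.continuousAt.comp hcf₂)
  simpa [Function.comp_def, Function.HasUncurry.uncurry] using
    hf.hasFDerivAt.comp_hasDerivAt (f := fun x => (x, x)) t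
      ((hasDerivAt_id t).prodMk (hasDerivAt_id t))

variable [NormedSpace ℝ E]

theorem hasDerivAt_intervalIntegral_of_continuous {μ : Measure ℝ} [IsLocallyFiniteMeasure μ]
    {F F' : 𝕜 → ℝ → E} (hF : Continuous F.uncurry) (hF' : Continuous F'.uncurry)
    (hFF' : ∀ x s, HasDerivAt (F · s) (F' x s) x) (a b : ℝ) (x : 𝕜) :
    HasDerivAt (fun y => ∫ s in a..b, F y s ∂μ) (∫ s in a..b, F' x s ∂μ) x := by
  obtain ⟨C, hC⟩ := ((isCompact_closedBall x 1).prod (isCompact_uIcc (a := a) (b := b)))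
    |>.exists_bound_of_continuousOn hF'.continuousOn
  exact (intervalIntegral.hasDerivAt_integral_of_dominated_loc_of_deriv_le (bound := fun _ => C)
    (Metric.closedBall_mem_nhds x one_pos)
    (.of_forall fun y => (hF.uncurry_left y).aestronglyMeasurable)
    ((hF.uncurry_left x).intervalIntegrable a b)
    (hF'.uncurry_left x).aestronglyMeasurable
    (.of_forall fun s hs y hy => hC (y, s) ⟨hy, uIoc_subset_uIcc hs⟩)
    intervalIntegrable_const
    (.of_forall fun s _ y _ => hFF' y s)).2

theorem hasDerivAt_intervalIntegral_upper_of_continuous [CompleteSpace E] {F F' : ℝ → ℝ → E}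
    (hF : Continuous F.uncurry) (hF' : Continuous F'.uncurry)
    (hFF' : ∀ x s, HasDerivAt (F · s) (F' x s) x) (a t : ℝ) :
    HasDerivAt (fun x => ∫ s in a..x, F x s) ((∫ s in a..t, F' t s) + F t t) t :=
  hasDerivAt_diag_of_continuousAt (f := fun x y => ∫ s in a..y, F x s)
    (f₁ := fun x y => ∫ s in a..y, F' x s) (f₂ := F)
    (.of_forall fun p => hasDerivAt_intervalIntegral_of_continuous hF hF' hFF' a p.2 p.1)
    (.of_forall fun p => ((hF.uncurry_left p.1).integral_hasStrictDerivAt a p.2).hasDerivAt)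
    (intervalIntegral.continuous_parametric_primitive_of_continuous hF').continuousAt
    hF.continuousAt

end LeibnizRule

section HalfLine

variable {E : Type*} [NormedAddCommGroup E] {a b : ℝ} {f : ℝ → E}

theorem exists_continuous_eqOn_Ici {X : Type*} [TopologicalSpace X] {f : ℝ → X}
    (hf : ContinuousOn f (Ici a)) : ∃ φ : ℝ → X, Continuous φ ∧ EqOn φ f (Ici a) :=
  ⟨fun x => f (max a x), hf.comp_continuous (by fun_prop) fun x => le_max_left a x,
    fun x hx => by simp only [max_eq_right (mem_Ici.1 hx)]⟩

variable [NormedSpace ℝ E] [CompleteSpace E]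

theorem integral_derivWithin_Ici (hf : ContDiffOn ℝ 1 f (Ici a)) (hab : a ≤ b) :
    ∫ x in a..b, derivWithin f (Ici a) x = f b - f a := by
  refine intervalIntegral.integral_eq_sub_of_hasDerivAt_of_le hab
    (hf.continuousOn.mono Icc_subset_Ici_self) (fun x hx => ?_) ?_
  · exact (hf.differentiableOn one_ne_zero x hx.1.le).hasDerivWithinAt.hasDerivAt
      (Ici_mem_nhds hx.1)
  · exact ((hf.continuousOn_derivWithin (uniqueDiffOn_Ici a) le_rfl).mono
      Icc_subset_Ici_self).intervalIntegrable_of_Icc hab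

theorem exists_hasDerivAt_eqOn_Ici (hf : ContDiffOn ℝ 1 f (Ici a)) :
    ∃ φ φ' : ℝ → E, Continuous φ' ∧ (∀ x, HasDerivAt φ (φ' x) x) ∧
      EqOn φ f (Ici a) ∧ EqOn φ' (derivWithin f (Ici a)) (Ici a) := by
  obtain ⟨φ', hφ', hφ'f⟩ := exists_continuous_eqOn_Ici
    (hf.continuousOn_derivWithin (uniqueDiffOn_Ici a) le_rfl)
  refine ⟨fun x => f a + ∫ s in a..x, φ' s, φ', hφ',
    fun x => (hφ'.integral_hasStrictDerivAt a x).hasDerivAt.const_add _, fun x hx => ?_, hφ'f⟩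
  have hint : ∫ s in a..x, φ' s = ∫ s in a..x, derivWithin f (Ici a) s :=
    intervalIntegral.integral_congr fun s hs => hφ'f (uIcc_of_le (mem_Ici.1 hx) ▸ hs).1
  simp only [hint, integral_derivWithin_Ici hf hx, add_sub_cancel]

end HalfLine

section VolterraConvolution

variable {E : Type*} [NormedAddCommGroup E] [NormedSpace ℝ E] {k k' k₁ : ℝ → ℝ} {h h₁ : ℝ → E}
  {t : ℝ}

/-- The Volterra convolution `(k * h)(t) = ∫₀ᵗ k(t - s) h(s) ds` of a scalar kernel with a
vector-valued function. Unlike `MeasureTheory.posConvolution` it is not cut off to `0 < t`, so that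
it is differentiable at every point when `k` is smooth on the whole line. -/
noncomputable def volterraConv (k : ℝ → ℝ) (h : ℝ → E) (t : ℝ) : E :=
  ∫ s in (0 : ℝ)..t, k (t - s) • h s

theorem volterraConv_congr (hk : EqOn k k₁ (Icc 0 t)) (hh : EqOn h h₁ (Icc 0 t)) (ht : 0 ≤ t) :
    volterraConv k h t = volterraConv k₁ h₁ t := by
  refine intervalIntegral.integral_congr fun s hs => ?_
  rw [uIcc_of_le ht] at hs
  simp only [hk (sub_mem_Icc_zero_iff_right.2 hs), hh hs]

theorem intervalIntegrable_volterraConv (hk : ContinuousOn k (Icc 0 t))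
    (hh : ContinuousOn h (Icc 0 t)) (ht : 0 ≤ t) :
    IntervalIntegrable (fun s => k (t - s) • h s) volume 0 t :=
  ((hk.comp (by fun_prop) fun _ => sub_mem_Icc_zero_iff_right.2).smul hh)
    |>.intervalIntegrable_of_Icc ht

theorem inner_volterraConv {H : Type*} [NormedAddCommGroup H] [InnerProductSpace ℝ H]
    [CompleteSpace H] {h : ℝ → H} (hk : ContinuousOn k (Icc 0 t))
    (hh : ContinuousOn h (Icc 0 t)) (ht : 0 ≤ t) (x : H) :
    ⟪x, volterraConv k h t⟫ = volterraConv k (fun s => ⟪x, h s⟫) t := by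
  simpa [volterraConv, inner_smul_right] using ((innerSL ℝ x).intervalIntegral_comp_comm
    (intervalIntegrable_volterraConv hk hh ht)).symm

variable [CompleteSpace E]

theorem hasDerivAt_volterraConv (hk : ∀ x, HasDerivAt k (k' x) x) (hk' : Continuous k')
    (hh : Continuous h) (t : ℝ) :
    HasDerivAt (volterraConv k h) (volterraConv k' h t + k 0 • h t) t := by
  have hk_cont : Continuous k := continuous_iff_continuousAt.2 fun x => (hk x).continuousAt
  simpa only [volterraConv, sub_self] using!
    hasDerivAt_intervalIntegral_upper_of_continuous (F := fun x s => k (x - s) • h s)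
      (F' := fun x s => k' (x - s) • h s) (by fun_prop) (by fun_prop)
      (fun x s => ((hk (x - s)).comp_sub_const x s).smul_const (h s)) 0 t

theorem hasDerivAt_volterraConv_of_contDiffOn_Ici (hk : ContDiffOn ℝ 1 k (Ici 0))
    (hh : ContinuousOn h (Ici 0)) (ht : 0 < t) :
    HasDerivAt (volterraConv k h)
      (volterraConv (derivWithin k (Ici 0)) h t + k 0 • h t) t := by
  obtain ⟨κ, κ', hκ', hκ, hκk, hκ'k⟩ := exists_hasDerivAt_eqOn_Ici hk
  obtain ⟨η, hη, hηh⟩ := exists_continuous_eqOn_Ici hh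
  have hconv : volterraConv k h =ᶠ[𝓝 t] volterraConv κ η := by
    filter_upwards [Ioi_mem_nhds ht] with x hx
    exact (volterraConv_congr (hκk.mono Icc_subset_Ici_self) (hηh.mono Icc_subset_Ici_self)
      (le_of_lt hx)).symm
  rw [← volterraConv_congr (hκ'k.mono Icc_subset_Ici_self) (hηh.mono Icc_subset_Ici_self) ht.le,
    ← hκk self_mem_Ici, ← hηh ht.le]
  exact (hasDerivAt_volterraConv hκ hκ' hη t).congr_of_eventuallyEq hconv

end VolterraConvolution

section MemoryFunctional

variable {H : Type*} [NormedAddCommGroup H] {g : ℝ → ℝ} {v : ℝ → H} {t : ℝ}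

/-- The functional `Φ(t) = ∫₀ᵗ g(t - s) ‖v(t) - v(s)‖² ds - G(t) ‖v(t)‖²`, with
`G(t) = ∫₀ᵗ g(s) ds`, through which the memory term enters the energy. -/
noncomputable def memoryFunctional (g : ℝ → ℝ) (v : ℝ → H) (t : ℝ) : ℝ :=
  (∫ s in (0 : ℝ)..t, g (t - s) * ‖v t - v s‖ ^ 2) - (∫ s in (0 : ℝ)..t, g s) * ‖v t‖ ^ 2

theorem memoryFunctional_coe_completion (g : ℝ → ℝ) (v : ℝ → H) :
    memoryFunctional g (fun s => (v s : Completion H)) = memoryFunctional g v := by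
  funext t
  simp only [memoryFunctional, ← Completion.coe_sub, Completion.norm_coe]

variable [InnerProductSpace ℝ H] {v' : H}

theorem memoryFunctional_eq_volterraConv [CompleteSpace H] (hg : ContinuousOn g (Icc 0 t))
    (hv : ContinuousOn v (Icc 0 t)) (ht : 0 ≤ t) :
    memoryFunctional g v t =
      volterraConv g (fun s => ‖v s‖ ^ 2) t - 2 * ⟪v t, volterraConv g v t⟫ := by
  have hG : ∫ s in (0 : ℝ)..t, g s = ∫ s in (0 : ℝ)..t, g (t - s) := by simp
  have hint {h : ℝ → ℝ} (hh : ContinuousOn h (Icc 0 t)) :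
      IntervalIntegrable (fun s => g (t - s) * h s) volume 0 t :=
    intervalIntegrable_volterraConv hg hh ht
  have hg_int : IntervalIntegrable (fun s => g (t - s)) volume 0 t := by
    simpa using hint (h := fun _ => 1) continuousOn_const
  rw [inner_volterraConv hg hv ht]
  simp only [memoryFunctional, volterraConv, smul_eq_mul, hG]
  rw [← intervalIntegral.integral_mul_const, ← intervalIntegral.integral_const_mul,
    ← intervalIntegral.integral_sub (hint (by fun_prop)) (hg_int.mul_const _),
    ← intervalIntegral.integral_sub (hint (by fun_prop)) ((hint (by fun_prop)).const_mul 2)]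
  refine intervalIntegral.integral_congr fun s _ => ?_
  simp only [norm_sub_sq_real]
  ring

theorem hasDerivAt_memoryFunctional_of_completeSpace [CompleteSpace H]
    (hg : ContDiffOn ℝ 1 g (Ici 0)) (hv : ContinuousOn v (Ici 0)) (ht : 0 < t)
    (hv' : HasDerivAt v v' t) :
    HasDerivAt (memoryFunctional g v)
      (memoryFunctional (derivWithin g (Ici 0)) v t - g 0 * ‖v t‖ ^ 2
        - 2 * volterraConv g (fun s => ⟪v s, v'⟫) t) t := by
  have hg' : ContinuousOn (derivWithin g (Ici 0)) (Ici 0) :=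
    hg.continuousOn_derivWithin (uniqueDiffOn_Ici 0) le_rfl
  have hexpand : memoryFunctional g v =ᶠ[𝓝 t]
      fun x => volterraConv g (fun s => ‖v s‖ ^ 2) x - 2 * ⟪v x, volterraConv g v x⟫ := by
    filter_upwards [Ioi_mem_nhds ht] with x hx
    exact memoryFunctional_eq_volterraConv (hg.continuousOn.mono Icc_subset_Ici_self)
      (hv.mono Icc_subset_Ici_self) (le_of_lt hx)
  have hsq : ContinuousOn (fun s => ‖v s‖ ^ 2) (Ici 0) := hv.norm.pow 2
  have hderiv := (hasDerivAt_volterraConv_of_contDiffOn_Ici hg hsq ht).sub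
    ((hv'.inner ℝ (hasDerivAt_volterraConv_of_contDiffOn_Ici hg hv ht)).const_mul 2)
  refine (hderiv.congr_of_eventuallyEq hexpand).congr_deriv ?_
  have hinner : volterraConv g (fun s => ⟪v s, v'⟫) t = ⟪v', volterraConv g v t⟫ := by
    simp only [real_inner_comm v', inner_volterraConv (hg.continuousOn.mono Icc_subset_Ici_self)
      (hv.mono Icc_subset_Ici_self) ht.le]
  rw [memoryFunctional_eq_volterraConv (hg'.mono Icc_subset_Ici_self)
    (hv.mono Icc_subset_Ici_self) ht.le, hinner]
  simp only [inner_add_right, inner_smul_right, real_inner_self_eq_norm_sq, smul_eq_mul]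
  ring

-- The completion of `H` has the same norms and inner products, and there `g * v` exists.
theorem hasDerivAt_memoryFunctional (hg : ContDiffOn ℝ 1 g (Ici 0))
    (hv : ContinuousOn v (Ici 0)) (ht : 0 < t) (hv' : HasDerivAt v v' t) :
    HasDerivAt (memoryFunctional g v)
      (memoryFunctional (derivWithin g (Ici 0)) v t - g 0 * ‖v t‖ ^ 2
        - 2 * volterraConv g (fun s => ⟪v s, v'⟫) t) t := by
  have h := hasDerivAt_memoryFunctional_of_completeSpace hg
    (Completion.continuous_coe H |>.comp_continuousOn hv) ht
    ((Completion.toComplL (𝕜 := ℝ) (E := H)).hasFDerivAt.comp_hasDerivAt t hv')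
  simpa [Function.comp_def, memoryFunctional_coe_completion] using h

theorem memory_term_differentiation_general (hg : ContDiffOn ℝ 1 g (Ici 0))
    (hv : ContinuousOn v (Ici 0)) (ht : 0 < t) (hv' : HasDerivAt v v' t) :
    HasDerivAt (fun τ => (∫ s in (0 : ℝ)..τ, g (τ - s) * ‖v τ - v s‖ ^ 2)
        - (∫ s in (0 : ℝ)..τ, g s) * ‖v τ‖ ^ 2)
      ((∫ s in (0 : ℝ)..t, derivWithin g (Ici 0) (t - s) * ‖v t - v s‖ ^ 2)
        - g t * ‖v t‖ ^ 2 - 2 * ∫ s in (0 : ℝ)..t, g (t - s) * ⟪v s, v'⟫) t := by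
  refine (hasDerivAt_memoryFunctional hg hv ht hv').congr_deriv ?_
  simp only [memoryFunctional, volterraConv, smul_eq_mul, integral_derivWithin_Ici hg ht.le]
  ring

end MemoryFunctional

/-- Differentiation identity for the memory (convolution) term: with
`Φ(t) = ∫₀ᵗ g(t−s)‖v(t) − v(s)‖² ds − G(t)‖v(t)‖²` where `G(t) = ∫₀ᵗ g(s) ds`, one has
`−2∫₀ᵗ g(t−s)⟨v(s), v'(t)⟩ ds = Φ'(t) + g(t)‖v(t)‖² − ∫₀ᵗ g'(t−s)‖v(t) − v(s)‖² ds`. -/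
theorem memory_term_differentiation {H : Type*} [NormedAddCommGroup H]
    [InnerProductSpace ℝ H] [CompleteSpace H] (g : ℝ → ℝ) (v : ℝ → H)
    (hg : ContDiffOn ℝ 1 g (Set.Ici 0)) (hv : ContDiffOn ℝ 1 v (Set.Ici 0)) :
    ∀ t : ℝ, 0 < t →
      DifferentiableAt ℝ (fun τ => (∫ s in (0 : ℝ)..τ, g (τ - s) * ‖v τ - v s‖ ^ 2)
        - (∫ s in (0 : ℝ)..τ, g s) * ‖v τ‖ ^ 2) t ∧
      -2 * ∫ s in (0 : ℝ)..t, g (t - s) * ⟪v s, derivWithin v (Set.Ici 0) t⟫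
        = deriv (fun τ => (∫ s in (0 : ℝ)..τ, g (τ - s) * ‖v τ - v s‖ ^ 2)
            - (∫ s in (0 : ℝ)..τ, g s) * ‖v τ‖ ^ 2) t
          + g t * ‖v t‖ ^ 2
          - ∫ s in (0 : ℝ)..t, derivWithin g (Set.Ici 0) (t - s) * ‖v t - v s‖ ^ 2 := by
  intro t ht
  have hv' : HasDerivAt v (derivWithin v (Set.Ici 0) t) t :=
    (hv.differentiableOn one_ne_zero t ht.le).hasDerivWithinAt.hasDerivAt (Ici_mem_nhds ht)
  have hΦ := memory_term_differentiation_general hg hv.continuousOn ht hv'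
  exact ⟨hΦ.differentiableAt, by rw [hΦ.deriv]; ring⟩
end

section
/- Let α, β, γ, λ₁ > 0 with γ ≤ αβ, and let ϱ ∈ (β − γ/α, β). For δ > 0 define the stability numbers κ(δ) = (αβ − γ + ϱδ)/(α + δ) and ϖ(δ) = (αβδ² − γδ² − αϱδ²)/(γ + δβ − ϱδ). Then κ(δ) > 0 and γ + δβ − ϱδ > 0 for every δ > 0, and there exists δ₀ > 0 such that ϖ(δ) < −λ₁·κ(δ) for every δ ≥ δ₀. -/
/-!
As `δ → ∞`, the number `κ(δ)` tends to `ϱ`, while `ϖ(δ)` is `δ` times a quotient of affine functions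
of `δ` tending to `(αβ - γ - αϱ)/(β - ϱ)`. Since `α > 0`, the condition `β - γ/α < ϱ < β` says
precisely that this limit has negative numerator and positive denominator, so `ϖ(δ) → -∞` and
`ϖ(δ)` eventually lies below any fixed multiple of `κ(δ)`.
-/

open Filter Topology

theorem tendsto_affine_div_affine_atTop {𝕜 : Type*} [Field 𝕜] [LinearOrder 𝕜]
    [IsStrictOrderedRing 𝕜] [TopologicalSpace 𝕜] [OrderTopology 𝕜]
    (a b c : 𝕜) {d : 𝕜} (hd : d ≠ 0) :
    Tendsto (fun x : 𝕜 ↦ (a + b * x) / (c + d * x)) atTop (𝓝 (b / d)) := by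
  have affine_div (p q : 𝕜) : Tendsto (fun x : 𝕜 ↦ p / x + q) atTop (𝓝 q) := by
    simpa using (tendsto_id.const_div_atTop p).add_const q
  refine ((affine_div a b).div (affine_div c d) hd).congr' ?_
  filter_upwards [eventually_ne_atTop 0] with x hx
  rw [Pi.div_apply, div_add' _ _ _ hx, div_add' _ _ _ hx, div_div_div_cancel_right₀ hx]

/-- The stability number `κ(δ)` of the Moore–Gibson–Thompson equation with memory kernel
`g(s) = ϱδe^{-δs}`; meaningful for `α + δ ≠ 0`. -/
noncomputable def stabilityKappa (α β γ ϱ δ : ℝ) : ℝ :=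
  (α * β - γ + ϱ * δ) / (α + δ)

/-- The stability number `ϖ(δ)` of the Moore–Gibson–Thompson equation with memory kernel
`g(s) = ϱδe^{-δs}`; meaningful for `γ + δβ - ϱδ ≠ 0`. -/
noncomputable def stabilityVarpi (α β γ ϱ δ : ℝ) : ℝ :=
  (α * β * δ ^ 2 - γ * δ ^ 2 - α * ϱ * δ ^ 2) / (γ + δ * β - ϱ * δ)

section

variable {α β γ ϱ δ : ℝ}

theorem stabilityKappa_pos (hα : 0 ≤ α) (hγ : γ ≤ α * β) (hϱ : 0 < ϱ) (hδ : 0 < δ) :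
    0 < stabilityKappa α β γ ϱ δ :=
  div_pos (add_pos_of_nonneg_of_pos (sub_nonneg.2 hγ) (mul_pos hϱ hδ))
    (add_pos_of_nonneg_of_pos hα hδ)

theorem stabilityVarpi_denom_pos (hγ : 0 ≤ γ) (hϱ : ϱ < β) (hδ : 0 < δ) :
    0 < γ + δ * β - ϱ * δ := by
  linarith [mul_lt_mul_of_pos_right hϱ hδ]

theorem tendsto_stabilityKappa (α β γ ϱ : ℝ) :
    Tendsto (stabilityKappa α β γ ϱ) atTop (𝓝 ϱ) := by
  have hquot := tendsto_affine_div_affine_atTop (α * β - γ) ϱ α one_ne_zero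
  rw [div_one] at hquot
  exact hquot.congr fun δ ↦ by rw [stabilityKappa, one_mul]

theorem tendsto_stabilityVarpi_atBot (hϱ : α * β - γ < α * ϱ) (hϱβ : ϱ < β) :
    Tendsto (stabilityVarpi α β γ ϱ) atTop atBot := by
  have hlim : (α * β - γ - α * ϱ) / (β - ϱ) < 0 :=
    div_neg_of_neg_of_pos (sub_neg.2 hϱ) (sub_pos.2 hϱβ)
  have hquot := tendsto_affine_div_affine_atTop 0 (α * β - γ - α * ϱ) γ (sub_pos.2 hϱβ).ne'
  refine (tendsto_id.atTop_mul_neg hlim hquot).congr fun δ ↦ ?_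
  rw [stabilityVarpi, id, mul_div_assoc']
  congr 1 <;> ring

theorem eventually_stabilityVarpi_lt_mul_stabilityKappa (hϱ : α * β - γ < α * ϱ) (hϱβ : ϱ < β)
    (c : ℝ) : ∀ᶠ δ in atTop, stabilityVarpi α β γ ϱ δ < c * stabilityKappa α β γ ϱ δ := by
  have hdiff := (tendsto_stabilityVarpi_atBot hϱ hϱβ).atBot_add
    ((tendsto_stabilityKappa α β γ ϱ).const_mul c).neg
  filter_upwards [hdiff.eventually_lt_atBot 0] with δ hδ
  linarith

end

/-- The stability numbers `κ(δ) = (αβ − γ + ϱδ)/(α + δ)` and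
`ϖ(δ) = (αβδ² − γδ² − αϱδ²)/(γ + δβ − ϱδ)` satisfy `κ(δ) > 0` and `γ + δβ − ϱδ > 0` for
all `δ > 0`, and `ϖ(δ) < −λ₁κ(δ)` for all sufficiently large `δ`. -/
theorem stability_numbers (α β γ lam₁ : ℝ) (hα : 0 < α) (hβ : 0 < β) (hγ : 0 < γ)
    (hlam₁ : 0 < lam₁) (hγαβ : γ ≤ α * β) (ϱ : ℝ) (hϱ₁ : β - γ / α < ϱ) (hϱ₂ : ϱ < β) :
    (∀ δ : ℝ, 0 < δ → 0 < (α * β - γ + ϱ * δ) / (α + δ) ∧ 0 < γ + δ * β - ϱ * δ) ∧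
    ∃ δ₀ > 0, ∀ δ ≥ δ₀,
      (α * β * δ ^ 2 - γ * δ ^ 2 - α * ϱ * δ ^ 2) / (γ + δ * β - ϱ * δ)
        < -lam₁ * ((α * β - γ + ϱ * δ) / (α + δ)) := by
  have hϱ_lower : α * β - γ < α * ϱ := by
    simpa only [mul_sub, mul_div_cancel₀ γ hα.ne'] using mul_lt_mul_of_pos_left hϱ₁ hα
  have hϱ_pos : 0 < ϱ := pos_of_mul_pos_right ((sub_nonneg.2 hγαβ).trans_lt hϱ_lower) hα.le
  refine ⟨fun δ hδ ↦ ⟨stabilityKappa_pos hα.le hγαβ hϱ_pos hδ,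
    stabilityVarpi_denom_pos hγ.le hϱ₂ hδ⟩, ?_⟩
  have hev := eventually_stabilityVarpi_lt_mul_stabilityKappa hϱ_lower hϱ₂ (-lam₁)
  exact ((eventually_gt_atTop 0).and (eventually_forall_ge_atTop.2 hev)).exists
end
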